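/- (Corollary 2.) Let N ≥ 2, let R be an N×N real symmetric positive-definite matrix with difference covariance matrix D, let u ∈ ℝ^N, and let 1_N ∈ ℝ^N be the all-ones vector. Define for v ∈ ℝ^N the functions φ_min(v) = inf over p ∈ ℝ of (1/2)·(p·1_N + v − u)ᵀ R⁻¹ (p·1_N + v − u) and φ_D(v) = (1/2)·(Δv − Δu)ᵀ D⁻¹ (Δv − Δu), where Δu, Δv are the difference vectors of u and v. Then φ_min(v) = φ_D(v) for every v ∈ ℝ^N; consequently, for any set X, any map v : X → ℝ^N, and any subset S ⊆ X, the set of minimizers over S of x ↦ φ_min(v(x)) equals the set of minimizers over S of x ↦ φ_D(v(x)). -/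

import Mathlib

open Matrix

/-- The difference covariance matrix: for an `N×N` matrix `R` with `N = n+2`, the
`(N−1)×(N−1)` matrix with entries `D_{mk} = R_{NN} + R_{mk} − R_{mN} − R_{kN}`. -/
def diffMatrix {n : ℕ} (R : Matrix (Fin (n + 2)) (Fin (n + 2)) ℝ) :
    Matrix (Fin (n + 1)) (Fin (n + 1)) ℝ :=
  fun m k =>
    R (Fin.last (n + 1)) (Fin.last (n + 1)) + R m.castSucc k.castSucc
      - R m.castSucc (Fin.last (n + 1)) - R k.castSucc (Fin.last (n + 1))

/-- The difference vector `Δg ∈ ℝ^{N−1}`, `(Δg)_m = g_m − g_N`. -/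
def diffVec {n : ℕ} (g : Fin (n + 2) → ℝ) : Fin (n + 1) → ℝ :=
  fun m => g m.castSucc - g (Fin.last (n + 1))

/-!
The lines `{p • 1 + w | p ∈ ℝ}` are exactly the fibres of the difference operator `B`, so the
infimum over `p` is the minimum of `xᵀ R⁻¹ x` subject to `B x = d` with `d = Δw`. For any `B` of
full row rank this minimum is `dᵀ (B R Bᵀ)⁻¹ d`: the point `z = R Bᵀ (B R Bᵀ)⁻¹ d` satisfies
`B z = d`, and since `R⁻¹ z` lies in the range of `Bᵀ`, every `x` with `B x = d` splits as `z` plus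
a vector that is `R⁻¹`-orthogonal to `z`. Finally `B R Bᵀ = D`.
-/

section ConstrainedMinimum

variable {ι κ K : Type*} [Fintype ι] [Fintype κ] [DecidableEq κ]

theorem star_add_dotProduct_mulVec_add_of_orthogonal [CommSemiring K] [StarRing K]
    {A : Matrix ι ι K} (hA : A.IsHermitian) {x y : ι → K} (hyx : star y ⬝ᵥ A *ᵥ x = 0) :
    star (x + y) ⬝ᵥ A *ᵥ (x + y) = star x ⬝ᵥ A *ᵥ x + star y ⬝ᵥ A *ᵥ y := by
  have hxy : star x ⬝ᵥ A *ᵥ y = 0 := by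
    rw [star_dotProduct, star_mulVec, hA.eq, ← dotProduct_mulVec, hyx, star_zero]
  rw [star_add, mulVec_add, add_dotProduct, dotProduct_add, dotProduct_add, hxy, hyx, add_zero,
    zero_add]

/-- The point `R Bᴴ (B R Bᴴ)⁻¹ d`, at which the quadratic form of `R⁻¹` attains its minimum over
the affine subspace `B x = d` when `R` is positive definite and `B` has full row rank. -/
noncomputable def constrainedMinimizer [CommRing K] [StarRing K] (R : Matrix ι ι K)
    (B : Matrix κ ι K) (d : κ → K) : ι → K :=
  R *ᵥ Bᴴ *ᵥ (B * R * Bᴴ)⁻¹ *ᵥ d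

theorem mulVec_constrainedMinimizer [CommRing K] [StarRing K] {R : Matrix ι ι K}
    {B : Matrix κ ι K} (hBRB : IsUnit (B * R * Bᴴ)) (d : κ → K) :
    B *ᵥ constrainedMinimizer R B d = d := by
  simp only [constrainedMinimizer, mulVec_mulVec, ← Matrix.mul_assoc]
  rw [mul_nonsing_inv _ ((isUnit_iff_isUnit_det _).1 hBRB), one_mulVec]

variable [DecidableEq ι]

theorem star_dotProduct_inv_mulVec_constrainedMinimizer [CommRing K] [StarRing K]
    {R : Matrix ι ι K} (hR : IsUnit R) (B : Matrix κ ι K) (d : κ → K) (x : ι → K) :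
    star x ⬝ᵥ R⁻¹ *ᵥ constrainedMinimizer R B d
      = star (B *ᵥ x) ⬝ᵥ (B * R * Bᴴ)⁻¹ *ᵥ d := by
  rw [constrainedMinimizer, mulVec_mulVec, nonsing_inv_mul _ ((isUnit_iff_isUnit_det _).1 hR),
    one_mulVec, dotProduct_mulVec, star_mulVec]

theorem isLeast_image_star_dotProduct_inv_mulVec [Field K] [PartialOrder K] [StarRing K]
    [AddLeftMono K] {R : Matrix ι ι K} (hR : R.PosDef) {B : Matrix κ ι K}
    (hB : Function.Injective B.vecMul) (d : κ → K) :
    IsLeast ((fun x => star x ⬝ᵥ R⁻¹ *ᵥ x) '' {x | B *ᵥ x = d})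
      (star d ⬝ᵥ (B * R * Bᴴ)⁻¹ *ᵥ d) := by
  set z := constrainedMinimizer R B d
  have hz : B *ᵥ z = d := mulVec_constrainedMinimizer (hR.mul_mul_conjTranspose_same hB).isUnit d
  have pairing_z (x : ι → K) : star x ⬝ᵥ R⁻¹ *ᵥ z = star (B *ᵥ x) ⬝ᵥ (B * R * Bᴴ)⁻¹ *ᵥ d :=
    star_dotProduct_inv_mulVec_constrainedMinimizer hR.isUnit B d x
  have value_z : star z ⬝ᵥ R⁻¹ *ᵥ z = star d ⬝ᵥ (B * R * Bᴴ)⁻¹ *ᵥ d := by rw [pairing_z, hz]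
  refine ⟨⟨z, hz, value_z⟩, ?_⟩
  rintro _ ⟨x, hx : B *ᵥ x = d, rfl⟩
  have orthogonal : star (x - z) ⬝ᵥ R⁻¹ *ᵥ z = 0 := by
    rw [pairing_z, mulVec_sub, hx, hz, sub_self, star_zero, zero_dotProduct]
  calc star d ⬝ᵥ (B * R * Bᴴ)⁻¹ *ᵥ d
      = star z ⬝ᵥ R⁻¹ *ᵥ z := value_z.symm
    _ ≤ star z ⬝ᵥ R⁻¹ *ᵥ z + star (x - z) ⬝ᵥ R⁻¹ *ᵥ (x - z) :=
      le_add_of_nonneg_right (hR.inv.posSemidef.dotProduct_mulVec_nonneg _)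
    _ = star (z + (x - z)) ⬝ᵥ R⁻¹ *ᵥ (z + (x - z)) :=
      (star_add_dotProduct_mulVec_add_of_orthogonal hR.inv.isHermitian orthogonal).symm
    _ = star x ⬝ᵥ R⁻¹ *ᵥ x := by rw [add_sub_cancel]

end ConstrainedMinimum

section Difference

variable {n : ℕ}

/-- The difference operator `B`, whose `m`-th row is `e_m - e_N`: the matrix of `g ↦ Δg`. -/
def diffOp (n : ℕ) : Matrix (Fin (n + 1)) (Fin (n + 2)) ℝ :=
  Matrix.of fun m => Pi.single m.castSucc 1 - Pi.single (Fin.last (n + 1)) 1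

theorem diffOp_mulVec (g : Fin (n + 2) → ℝ) : diffOp n *ᵥ g = diffVec g := by
  ext m
  simp only [mulVec, diffOp, of_apply, sub_dotProduct, single_one_dotProduct, diffVec]

theorem diffVec_sub (g h : Fin (n + 2) → ℝ) : diffVec (g - h) = diffVec g - diffVec h := by
  simp only [← diffOp_mulVec, mulVec_sub]

theorem vecMul_diffOp_castSucc (a : Fin (n + 1) → ℝ) (m : Fin (n + 1)) :
    (a ᵥ* diffOp n) m.castSucc = a m := by
  simp [vecMul, dotProduct, diffOp, Pi.single_apply, Fin.castSucc_ne_last]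

theorem vecMul_diffOp_injective (n : ℕ) : Function.Injective (diffOp n).vecMul := by
  intro a b hab
  ext m
  rw [← vecMul_diffOp_castSucc a, ← vecMul_diffOp_castSucc b]
  exact congrFun hab m.castSucc

theorem diffVec_eq_diffVec_iff {x w : Fin (n + 2) → ℝ} :
    diffVec x = diffVec w ↔ ∃ p : ℝ, p • 1 + w = x := by
  constructor
  · intro h
    refine ⟨x (Fin.last _) - w (Fin.last _), funext fun i => ?_⟩
    cases i using Fin.lastCases with
    | last => simp
    | cast m =>
      have hm : x m.castSucc - x (Fin.last _) = w m.castSucc - w (Fin.last _) := congrFun h m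
      simp only [Pi.add_apply, Pi.smul_apply, Pi.one_apply, smul_eq_mul, mul_one]
      linarith
  · rintro ⟨p, rfl⟩
    ext m
    simp [diffVec]

theorem diffMatrix_eq_diffOp_mul_mul_conjTranspose {R : Matrix (Fin (n + 2)) (Fin (n + 2)) ℝ}
    (hR : R.IsHermitian) : diffMatrix R = diffOp n * R * (diffOp n)ᴴ := by
  ext m k
  have left_mul (j : Fin (n + 2)) :
      (diffOp n * R) m j = R m.castSucc j - R (Fin.last (n + 1)) j :=
    congrFun (diffOp_mulVec (R.col j)) m
  have right_mul : (diffOp n * R * (diffOp n)ᴴ) m k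
      = (diffOp n * R) m k.castSucc - (diffOp n * R) m (Fin.last (n + 1)) := by
    rw [conjTranspose_eq_transpose_of_trivial, mul_apply_eq_vecMul, vecMul_transpose,
      diffOp_mulVec, diffVec]
  rw [right_mul, left_mul, left_mul, diffMatrix,
    show R k.castSucc (Fin.last (n + 1)) = R (Fin.last (n + 1)) k.castSucc from
      (isHermitian_iff_isSymm.1 hR).apply _ _]
  ring

theorem isLeast_range_dotProduct_inv_mulVec_smul_one_add
    {R : Matrix (Fin (n + 2)) (Fin (n + 2)) ℝ} (hR : R.PosDef) (w : Fin (n + 2) → ℝ) :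
    IsLeast (Set.range fun p : ℝ => (p • 1 + w) ⬝ᵥ R⁻¹ *ᵥ (p • 1 + w))
      (diffVec w ⬝ᵥ (diffMatrix R)⁻¹ *ᵥ diffVec w) := by
  have fibre : {x | diffOp n *ᵥ x = diffVec w} = Set.range fun p : ℝ => p • 1 + w := by
    ext x
    simp only [Set.mem_ofPred_eq, diffOp_mulVec, diffVec_eq_diffVec_iff, Set.mem_range]
  have h := isLeast_image_star_dotProduct_inv_mulVec hR (vecMul_diffOp_injective n) (diffVec w)
  rw [fibre, ← Set.range_comp, ← diffMatrix_eq_diffOp_mul_mul_conjTranspose hR.isHermitian] at h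
  simpa only [Function.comp_def, star_trivial] using h

end Difference

/-- Corollary 2: the power-minimized RSS KL divergence
`φ_min(v) = inf_p (1/2)(p·1 + v − u)ᵀ R⁻¹ (p·1 + v − u)` equals the DRSS KL divergence
`φ_D(v) = (1/2)(Δv − Δu)ᵀ D⁻¹ (Δv − Δu)` for every `v`; consequently, for any map
`v : X → ℝ^N` and any `S ⊆ X`, the minimizers over `S` of `x ↦ φ_min(v x)` and of
`x ↦ φ_D(v x)` coincide. -/
theorem rss_drss_same_optimal_location
    (n : ℕ) (R : Matrix (Fin (n + 2)) (Fin (n + 2)) ℝ)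
    (hRsymm : R.IsSymm) (hRpd : R.PosDef) (u : Fin (n + 2) → ℝ) :
    let ones : Fin (n + 2) → ℝ := fun _ => (1 : ℝ)
    let D := diffMatrix R
    let φmin : (Fin (n + 2) → ℝ) → ℝ := fun v =>
      ⨅ p : ℝ, (1 / 2) * ((p • ones + v - u) ⬝ᵥ (R⁻¹).mulVec (p • ones + v - u))
    let φD : (Fin (n + 2) → ℝ) → ℝ := fun v =>
      (1 / 2) * ((diffVec v - diffVec u) ⬝ᵥ (D⁻¹).mulVec (diffVec v - diffVec u))
    (∀ v : Fin (n + 2) → ℝ, φmin v = φD v) ∧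
      ∀ (X : Type) (vmap : X → (Fin (n + 2) → ℝ)) (S : Set X),
        {x ∈ S | ∀ y ∈ S, φmin (vmap x) ≤ φmin (vmap y)}
          = {x ∈ S | ∀ y ∈ S, φD (vmap x) ≤ φD (vmap y)} := by
  intro ones D φmin φD
  have φmin_eq_φD (v : Fin (n + 2) → ℝ) : φmin v = φD v := by
    calc φmin v
        = ⨅ p : ℝ, (1 / 2) * ((p • 1 + (v - u)) ⬝ᵥ R⁻¹ *ᵥ (p • 1 + (v - u))) := by
          simp only [φmin, add_sub_assoc]; rfl
      _ = (1 / 2) * ⨅ p : ℝ, (p • 1 + (v - u)) ⬝ᵥ R⁻¹ *ᵥ (p • 1 + (v - u)) :=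
          (Real.mul_iInf_of_nonneg (by norm_num) _).symm
      _ = (1 / 2) * (diffVec (v - u) ⬝ᵥ D⁻¹ *ᵥ diffVec (v - u)) := by
          rw [iInf, (isLeast_range_dotProduct_inv_mulVec_smul_one_add hRpd (v - u)).csInf_eq]
      _ = φD v := by rw [diffVec_sub]
  exact ⟨φmin_eq_φD, fun X vmap S => by simp only [φmin_eq_φD]⟩
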